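/- arXiv:2311.13823 — 2 statements merged into one kernel-verified Lean document; each statement's English description precedes it below -/
import Mathlib

section
/- For every integer k ≥ 2 that is not of the form 3·2ⁿ with n ≥ 0, one has β_k ≥ β_c. -/
open Filter Set

noncomputable section

namespace FatSierpinski

/-- The digit set Ω = {(0,0),(1,0),(0,1)} ⊆ ℝ². -/
def OmegaR : Set (ℝ × ℝ) := {(0, 0), (1, 0), (0, 1)}

/-- The fat Sierpinski gasket `S_β` (sequences are 0-indexed: `d i` is the digit d_{i+1}). -/
def Sfat (β : ℝ) : Set (ℝ × ℝ) :=
  {x | ∃ d : ℕ → ℝ × ℝ, (∀ i, d i ∈ OmegaR) ∧ x = ∑' i : ℕ, (β ^ (i + 1))⁻¹ • d i}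

/-- The convex hull `Δ_β` of `S_β`. -/
def Delta (β : ℝ) : Set (ℝ × ℝ) := convexHull ℝ (Sfat β)

/-- The map `f_d(x) = (x + d)/β`. -/
def fmap (β : ℝ) (d : ℝ × ℝ) (x : ℝ × ℝ) : ℝ × ℝ := β⁻¹ • (x + d)

/-- The overlap region `O_β = ⋃_{c ≠ d ∈ Ω} f_c(Δ_β) ∩ f_d(Δ_β)`. -/
def Ofat (β : ℝ) : Set (ℝ × ℝ) :=
  ⋃ c ∈ OmegaR, ⋃ d ∈ OmegaR, ⋃ (_ : c ≠ d), (fmap β c '' Delta β) ∩ (fmap β d '' Delta β)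

/-- The univoque set of codings `𝐔_β`. -/
def Ufat (β : ℝ) : Set (ℕ → ℝ × ℝ) :=
  {d | (∀ i, d i ∈ OmegaR) ∧
    ∀ n : ℕ, (∑' i : ℕ, (β ^ (i + 1))⁻¹ • d (n + i)) ∉ Ofat β}

/-- `d` has smallest period `k`. -/
def SmallestPeriod {α : Type*} (d : ℕ → α) (k : ℕ) : Prop :=
  0 < k ∧ (∀ i, d (i + k) = d i) ∧ ∀ j, 0 < j → j < k → ∃ i, d (i + j) ≠ d i

/-- The critical base `β_k`. -/
def betaK (k : ℕ) : ℝ :=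
  sInf {β : ℝ | β ∈ Set.Ioc (1 : ℝ) 2 ∧ ∃ d ∈ Ufat β, SmallestPeriod d k}

/-- Strict lexicographic order on sequences. -/
def seqLT {α : Type*} [Preorder α] (a b : ℕ → α) : Prop :=
  ∃ n, (∀ i < n, a i = b i) ∧ a n < b n

/-- Weak lexicographic order on sequences. -/
def seqLE {α : Type*} [Preorder α] (a b : ℕ → α) : Prop :=
  seqLT a b ∨ a = b

/-- `a` is a 0-1 sequence. -/
def IsBinary (a : ℕ → ℕ) : Prop := ∀ i, a i ≤ 1

/-- `a` does not end with `0^∞`. -/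
def NotEndInZeros (a : ℕ → ℕ) : Prop := ∀ N, ∃ i, N ≤ i ∧ a i ≠ 0

/-- `∑_{i=1}^∞ a_i β^{-i} = 1` (0-indexed: `a i` is a_{i+1}). -/
def SumsToOne (β : ℝ) (a : ℕ → ℕ) : Prop :=
  ∑' i : ℕ, (a i : ℝ) / β ^ (i + 1) = 1

/-- `a` is the quasi-greedy β-expansion of 1: the lexicographically largest
binary sequence not ending in `0^∞` whose value in base β is 1. -/
def IsQuasiGreedy (β : ℝ) (a : ℕ → ℕ) : Prop :=
  IsBinary a ∧ NotEndInZeros a ∧ SumsToOne β a ∧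
    ∀ b : ℕ → ℕ, IsBinary b → NotEndInZeros b → SumsToOne β b → seqLE b a

/-- `w⁺`: replace the final digit 0 of a block by 1. -/
def plusBlock (w : List ℕ) : List ℕ := w.dropLast ++ [1]

/-- `Θ` flips the outer digits of every consecutive triple
(000↦101, 001↦100, 100↦001, 101↦000). -/
def thetaBlock (w : List ℕ) : List ℕ :=
  w.mapIdx fun i x => if i % 3 = 1 then x else 1 - x

/-- `tB n` is the block `t_{n+1}`: `t_1 = 100`, `t_{n+1} = t_n⁺ Θ(t_n⁺)`. -/
def tB : ℕ → List ℕ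
  | 0 => [1, 0, 0]
  | n + 1 => plusBlock (tB n) ++ thetaBlock (plusBlock (tB n))

/-- The sequence `u w^∞` (the block `u` followed by `w` repeated forever). -/
def prefixPeriodic (u w : List ℕ) : ℕ → ℕ := fun i =>
  if i < u.length then u.getD i 0 else w.getD ((i - u.length) % w.length) 0

/-- The periodic sequence `w^∞`. -/
def periodicSeq (w : List ℕ) : ℕ → ℕ := fun i => w.getD (i % w.length) 0

/-- The componentwise limit `λ = 101001000101…` of the blocks `t_n`
(the digit `λ_{i+1}` has stabilized in `t_{i+2} = tB (i+1)`). -/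
def lamSeq : ℕ → ℕ := fun i => (tB (i + 1)).getD i 0

/-- `β_c` is the unique base in (1,2] with `∑ λ_i β^{-i} = 1`. -/
def IsBetaC (β : ℝ) : Prop := β ∈ Set.Ioc (1 : ℝ) 2 ∧ SumsToOne β lamSeq

/-- The sequence `t_{n+2}⁺ (Θ(t_{n+2}))^∞`, the quasi-greedy expansion of 1 for `β̂_n`. -/
def hatSeq (n : ℕ) : ℕ → ℕ :=
  prefixPeriodic (plusBlock (tB (n + 1))) (thetaBlock (tB (n + 1)))

/-- The Sharkovskii ordering `k ⊳ ℓ` on positive integers. -/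
def Sharkovskii (k l : ℕ) : Prop :=
  ∃ a b c d : ℕ, k = 2 ^ a * (2 * b + 1) ∧ l = 2 ^ c * (2 * d + 1) ∧ k ≠ l ∧
    ((1 ≤ b ∧ d = 0) ∨ (1 ≤ b ∧ 1 ≤ d ∧ (a < c ∨ (a = c ∧ b < d))) ∨
      (b = 0 ∧ d = 0 ∧ c < a))

/-- The digit set Ω as pairs of naturals (for combinatorial statements). -/
def OmegaD : Set (ℕ × ℕ) := {(0, 0), (1, 0), (0, 1)}

/-- The periodic extension `(d_1 … d_k)^∞` of a block. -/
def cyc (d : List (ℕ × ℕ)) : ℕ → ℕ × ℕ := fun i => d.getD (i % d.length) (0, 0)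

/-- Strict lexicographic order on lists. -/
def listLT (u v : List ℕ) : Prop := List.Lex (· < ·) u v

/-- Weak lexicographic order on lists. -/
def listLE (u v : List ℕ) : Prop := listLT u v ∨ u = v

/-- The first components `d_1¹ … d_k¹` of a block over Ω. -/
def comp1 (d : List (ℕ × ℕ)) : List ℕ := d.map Prod.fst

/-- The second components `d_1² … d_k²` of a block over Ω. -/
def comp2 (d : List (ℕ × ℕ)) : List ℕ := d.map Prod.snd

/-- The digits `(1 - d_1⁺) … (1 - d_k⁺)` where `d⁺ = d¹ + d²`. -/
def comp3 (d : List (ℕ × ℕ)) : List ℕ := d.map fun x => 1 - x.1 - x.2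

/-- Cyclic shift of a list by `j`. -/
def rot {α : Type*} (j : ℕ) (l : List α) : List α := l.drop j ++ l.take j

/-- `d` is a representation of the binary block `a`. -/
def IsRepresentation (a : List ℕ) (d : List (ℕ × ℕ)) : Prop :=
  d.length = a.length ∧ (∀ x ∈ d, x ∈ OmegaD) ∧
  SmallestPeriod (cyc d) a.length ∧
  comp1 d = a ∧ listLE (comp3 d) (comp2 d) ∧ listLE (comp2 d) a ∧
  ∀ j < a.length,
    listLE (comp1 (rot j d)) a ∧ listLE (comp2 (rot j d)) a ∧ listLE (comp3 (rot j d)) a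

/-- A binary block is admissible if it has a representation. -/
def IsAdmissible (a : List ℕ) : Prop := ∃ d, IsRepresentation a d

/-- The `i`-th consecutive triple of a block (0-indexed). -/
def tripleAt (a : List ℕ) (i : ℕ) : List ℕ :=
  [a.getD (3 * i) 0, a.getD (3 * i + 1) 0, a.getD (3 * i + 2) 0]

/-- The edges of the directed graph on {000, 001, 100, 101} defining the subshift `X`. -/
def XEdge (u v : List ℕ) : Prop :=
  (u, v) ∈ ({([1,0,1], [0,0,1]), ([1,0,1], [0,0,0]), ([0,0,1], [0,0,0]),
             ([0,0,0], [1,0,1]), ([0,0,0], [1,0,0]), ([1,0,0], [1,0,1])} :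
      Set (List ℕ × List ℕ))

/-!
Code a digit sequence by a word over three letters. In barycentric coordinates, a point `x` of
`Δ_β` lies in `f_l(Δ_β)` when the `l`-th coordinate of `β x` is at least `1`; so the word is
univoque when, after every letter other than `l`, the occurrences of `l` read in base `β` have value
less than `1`. For `β ≤ β_c` this implies, by Parry's criterion, that these occurrences form a
sequence lexicographically at most `λ`, a condition in which `β` no longer appears.

A periodic word of period at least two that satisfies this condition either repeats the three
letters cyclically, with period `3`, or consists, up to a shift, of triples `abc` and `acb`. Since
`λ` is a recoding by triples of the Thue–Morse sequence, the binary sequence telling which triple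
occurs then satisfies the two-sided Thue–Morse condition of Komornik and Loreti. If such a sequence
has smallest period greater than two, it is, up to a shift, the image under the Thue–Morse
substitution of another one, of half the period; by descent its period is a power of two.
-/

/-! ### Smallest periods -/

section SmallestPeriod

variable {A B : Type*} {d : ℕ → A} {k : ℕ}

lemma SmallestPeriod.periodic (h : SmallestPeriod d k) : Function.Periodic d k := h.2.1

lemma SmallestPeriod.apply_add_mul (h : SmallestPeriod d k) (i c : ℕ) : d (i + c * k) = d i := by
  simpa only [smul_eq_mul] using h.periodic.nsmul c i

lemma SmallestPeriod.le_of_periodic (h : SmallestPeriod d k) {p : ℕ} (hp : 0 < p)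
    (hd : Function.Periodic d p) : k ≤ p := by
  by_contra! hlt
  obtain ⟨i, hi⟩ := h.2.2 p hp hlt
  exact hi (hd i)

lemma SmallestPeriod.shift (h : SmallestPeriod d k) (c : ℕ) :
    SmallestPeriod (fun i => d (c + i)) k := by
  refine ⟨h.1, fun i => by simpa only [add_assoc] using h.periodic (c + i), fun j hj hjk => ?_⟩
  obtain ⟨i, hi⟩ := h.2.2 j hj hjk
  have hle : c ≤ i + c * k := (Nat.le_mul_of_pos_right c h.1).trans (Nat.le_add_left _ i)
  obtain ⟨i', hi'⟩ := Nat.exists_eq_add_of_le hle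
  refine ⟨i', fun heq => hi ?_⟩
  rw [← h.apply_add_mul (i + j) c, ← h.apply_add_mul i c, add_right_comm, hi', add_assoc]
  exact heq

lemma SmallestPeriod.succ_ne (h : SmallestPeriod d k) (hk : 2 ≤ k)
    (hprop : ∀ i, d (i + 1) ≠ d i → d (i + 2) ≠ d (i + 1)) (i : ℕ) : d (i + 1) ≠ d i := by
  obtain ⟨c, hc⟩ := h.2.2 1 one_pos hk
  have hlater (j : ℕ) (hj : c ≤ j) : d (j + 1) ≠ d j :=
    Nat.le_induction hc (fun j _ => hprop j) j hj
  have hle : c ≤ i + c * k := (Nat.le_mul_of_pos_right c h.1).trans (Nat.le_add_left _ i)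
  rw [← h.apply_add_mul i c, ← h.apply_add_mul (i + 1) c, add_right_comm]
  exact hlater _ hle

lemma SmallestPeriod.exists_ne (h : SmallestPeriod d k) (hk : 2 ≤ k) (n : ℕ) (a : A) :
    ∃ i, d (n + i) ≠ a := by
  obtain ⟨i, hi⟩ := (h.shift n).2.2 1 one_pos hk
  by_contra! hconst
  exact hi ((hconst _).trans (hconst _).symm)

lemma smallestPeriod_comp_iff {f : A → B} (hf : Function.Injective f) :
    SmallestPeriod (fun i => f (d i)) k ↔ SmallestPeriod d k := by
  simp only [SmallestPeriod, hf.eq_iff, ne_eq]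

lemma smallestPeriod_ite_dvd {a b : A} (hab : a ≠ b) (hk : 0 < k) :
    SmallestPeriod (fun i => if k ∣ i then a else b) k := by
  refine ⟨hk, fun i => by simp only [Nat.dvd_add_self_right], fun j hj hjk => ⟨0, ?_⟩⟩
  simpa [Nat.not_dvd_of_pos_of_lt hj hjk] using hab.symm

end SmallestPeriod

/-! ### The Thue–Morse sequence -/

section Double

variable {x y z : ℕ → Bool}

/-- The image of a binary sequence under the Thue–Morse substitution `0 ↦ 01`, `1 ↦ 10`. -/
def double (y : ℕ → Bool) : ℕ → Bool := fun i => y (i / 2) ^^ decide (i % 2 = 1)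

lemma double_even (y : ℕ → Bool) (j : ℕ) : double y (2 * j) = y j := by simp [double]

lemma double_odd (y : ℕ → Bool) (j : ℕ) : double y (2 * j + 1) = !y j := by
  have hdiv : (2 * j + 1) / 2 = j := by omega
  simp [double, hdiv]

lemma eq_double (h0 : ∀ j, x (2 * j) = y j) (h1 : ∀ j, x (2 * j + 1) = !y j) : x = double y := by
  funext i
  obtain ⟨j, rfl | rfl⟩ := Nat.even_or_odd' i
  · rw [h0, double_even]
  · rw [h1, double_odd]

lemma double_strictMono : StrictMono fun y : Lex (ℕ → Bool) => toLex (double (ofLex y)) := by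
  rintro y z ⟨m, heq, hlt⟩
  refine ⟨2 * m, fun i hi => ?_, ?_⟩
  · simp only [double, Pi.toLex_apply, Pi.ofLex_apply, heq (i / 2) (by omega)]
  · simp only [Pi.toLex_apply, double_even]
    exact hlt

lemma toLex_double_le_iff : toLex (double y) ≤ toLex (double z) ↔ toLex y ≤ toLex z :=
  double_strictMono.le_iff_le

end Double

/-- The Thue–Morse sequence `0110 1001 …`: the parity of the binary digit sum. -/
def thueMorse (n : ℕ) : Bool := (Nat.digits 2 n).sum.bodd

lemma thueMorse_two_mul (n : ℕ) : thueMorse (2 * n) = thueMorse n := by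
  rcases Nat.eq_zero_or_pos n with rfl | hn
  · rfl
  · have h := Nat.digits_add 2 one_lt_two 0 n two_pos (Or.inr hn.ne')
    simp only [zero_add] at h
    simp [thueMorse, h]

lemma thueMorse_two_mul_add_one (n : ℕ) : thueMorse (2 * n + 1) = !thueMorse n := by
  have h := Nat.digits_add 2 one_lt_two 1 n one_lt_two (Or.inl one_ne_zero)
  rw [add_comm] at h
  simp only [thueMorse, h, List.sum_cons, Nat.bodd_add, Nat.bodd_one, Bool.true_xor]

lemma thueMorse_eq_double : thueMorse = double thueMorse :=
  eq_double thueMorse_two_mul thueMorse_two_mul_add_one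

lemma thueMorse_two_pow_add {n j : ℕ} (hj : j < 2 ^ n) :
    thueMorse (2 ^ n + j) = !thueMorse j := by
  induction n generalizing j with
  | zero =>
    obtain rfl : j = 0 := by simpa using hj
    rfl
  | succ n ih =>
    obtain ⟨c, rfl | rfl⟩ := Nat.even_or_odd' j
    · rw [pow_succ', ← mul_add, thueMorse_two_mul, thueMorse_two_mul, ih (by omega)]
    · rw [pow_succ', ← add_assoc, ← mul_add, thueMorse_two_mul_add_one, thueMorse_two_mul_add_one,
        ih (by omega)]

lemma thueMorse_two_pow (n : ℕ) : thueMorse (2 ^ n) = true :=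
  thueMorse_two_pow_add (n := n) (j := 0) (by positivity)

/-- The tail of `x` starting at `i`, complemented if necessary so that it begins with `0`. -/
def normTail (x : ℕ → Bool) (i : ℕ) : ℕ → Bool := fun j => x (i + j) ^^ x i

lemma normTail_zero (x : ℕ → Bool) (i : ℕ) : normTail x i 0 = false := by simp [normTail]

lemma normTail_double (y : ℕ → Bool) (i : ℕ) :
    normTail (double y) (2 * i) = double (normTail y i) := by
  refine eq_double (fun j => ?_) fun j => ?_
  · simp only [normTail, ← mul_add, double_even]
  · simp only [normTail, ← add_assoc, ← mul_add, double_even, double_odd, Bool.not_xor]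

lemma toLex_normTail_thueMorse_le (i : ℕ) : toLex (normTail thueMorse i) ≤ toLex thueMorse := by
  induction i using Nat.strong_induction_on with
  | _ i ih =>
    obtain ⟨a, rfl | rfl⟩ := Nat.even_or_odd' i
    · rcases Nat.eq_zero_or_pos a with rfl | ha
      · exact le_of_eq (congrArg toLex (funext fun j => by
          simp [normTail, show thueMorse 0 = false from rfl]))
      · rw [thueMorse_eq_double, normTail_double, toLex_double_le_iff]
        exact ih a (by omega)
    · have h1 : thueMorse (2 * a + 1 + 1) = thueMorse (a + 1) := thueMorse_two_mul (a + 1)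
      have h2 : thueMorse (2 * a + 1 + 2) = !thueMorse (a + 1) := thueMorse_two_mul_add_one (a + 1)
      cases hb : normTail thueMorse (2 * a + 1) 1 with
      | false =>
        refine le_of_lt ⟨1, fun j hj => ?_, by simp [hb, thueMorse]⟩
        obtain rfl : j = 0 := by omega
        exact normTail_zero _ _
      | true =>
        have hc : normTail thueMorse (2 * a + 1) 2 = false := by
          simp only [normTail, h1, h2, Bool.not_xor, Bool.not_eq_false'] at hb ⊢
          exact hb
        refine le_of_lt ⟨2, fun j hj => ?_, by simp [hc, thueMorse]⟩
        interval_cases j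
        · exact normTail_zero _ _
        · exact hb

/-- The two-sided lexicographic condition of Komornik and Loreti: every tail of `x`, normalised to
begin with `0`, is at most the Thue–Morse sequence. -/
def KomornikLoreti (x : ℕ → Bool) : Prop := ∀ i, toLex (normTail x i) ≤ toLex thueMorse

namespace KomornikLoreti

variable {x y : ℕ → Bool} {i : ℕ}

lemma shift (h : KomornikLoreti x) (c : ℕ) : KomornikLoreti fun i => x (c + i) := fun i => by
  have heq : normTail (fun i => x (c + i)) i = normTail x (c + i) := by
    funext j
    simp only [normTail, add_assoc]
  exact heq ▸ h (c + i)

lemma of_double (h : KomornikLoreti (double y)) : KomornikLoreti y := fun i => by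
  rw [← toLex_double_le_iff, ← normTail_double, ← thueMorse_eq_double]
  exact h (2 * i)

lemma apply_add_eq_of_initial (h : KomornikLoreti x) {n : ℕ} (hn : thueMorse n = false)
    (hpre : ∀ j < n, (x (i + j) = x i ↔ thueMorse j = false)) : x (i + n) = x i := by
  have hle : normTail x i n ≤ thueMorse n :=
    Pi.apply_le_of_toLex (h i) fun j hj => by
      have := hpre j hj
      simp only [normTail]
      grind
  rw [hn] at hle
  simpa [normTail] using le_bot_iff.mp hle

lemma apply_three_eq (h : KomornikLoreti x) (h1 : x (i + 1) ≠ x i) (h2 : x (i + 2) ≠ x i) :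
    x (i + 3) = x i := by
  refine h.apply_add_eq_of_initial (by simp [thueMorse]) fun j hj => ?_
  interval_cases j <;> simp [thueMorse, *]

lemma apply_five_eq (h : KomornikLoreti x) (h1 : x (i + 1) ≠ x i) (h2 : x (i + 2) ≠ x i)
    (h4 : x (i + 4) ≠ x i) : x (i + 5) = x i := by
  have h3 := h.apply_three_eq h1 h2
  refine h.apply_add_eq_of_initial (by simp [thueMorse]) fun j hj => ?_
  interval_cases j <;> simp [thueMorse, *]

lemma apply_six_eq (h : KomornikLoreti x) (h1 : x (i + 1) ≠ x i) (h2 : x (i + 2) ≠ x i)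
    (h4 : x (i + 4) ≠ x i) : x (i + 6) = x i := by
  have h3 := h.apply_three_eq h1 h2
  have h5 := h.apply_five_eq h1 h2 h4
  refine h.apply_add_eq_of_initial (by simp [thueMorse]) fun j hj => ?_
  interval_cases j <;> simp [thueMorse, *]

/-- Once a change is followed by a repeat, the changes occur at every second position: two repeats
in a row contradict `apply_three_eq`, and two changes in a row recreate the pattern further on. -/
lemma ne_of_change_of_repeat (h : KomornikLoreti x) (j : ℕ) (hne : x (i + 1) ≠ x i)
    (heq : x (i + 2) = x (i + 1)) : x (i + 2 * j + 3) ≠ x (i + 2 * j + 2) := by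
  induction j using Nat.strong_induction_on generalizing i with
  | _ j ih =>
    have h2 : x (i + 2) ≠ x i := heq ▸ hne
    have h3 := h.apply_three_eq hne h2
    have hchange : x (i + 3) ≠ x (i + 2) := fun h' => h2 (h'.symm.trans h3)
    match j with
    | 0 => exact hchange
    | j + 1 =>
      by_cases h4 : x (i + 4) = x (i + 3)
      · have := ih j (by omega) hchange h4
        rwa [show i + 2 * (j + 1) = i + 2 + 2 * j by ring]
      · have h4' : x (i + 4) ≠ x i := h3 ▸ h4
        have h5 := h.apply_five_eq hne h2 h4'
        have h6 := h.apply_six_eq hne h2 h4'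
        have hchange' : x (i + 5) ≠ x (i + 4) := fun h' => h4' (h'.symm.trans h5)
        match j with
        | 0 => exact hchange'
        | j + 1 =>
          have := ih j (by omega) hchange' (h6.trans h5.symm)
          rwa [show i + 2 * (j + 1 + 1) = i + 4 + 2 * j by ring]

end KomornikLoreti

lemma SmallestPeriod.of_double {y : ℕ → Bool} {q : ℕ} (h : SmallestPeriod (double y) (2 * q)) :
    SmallestPeriod y q := by
  have hper (p : ℕ) (hp : Function.Periodic y p) : Function.Periodic (double y) (2 * p) := by
    intro i
    have hdiv : (i + 2 * p) / 2 = i / 2 + p := by omega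
    simp only [double, hdiv, hp (i / 2), Nat.add_mul_mod_self_left]
  refine ⟨Nat.pos_of_mul_pos_left h.1, fun i => ?_, fun j hj hjq => ?_⟩
  · simpa only [← mul_add, double_even] using h.periodic (2 * i)
  · by_contra! hj'
    have := h.le_of_periodic (by positivity) (hper j hj')
    omega

namespace KomornikLoreti

variable {x : ℕ → Bool} {m : ℕ}

lemma exists_half (h : KomornikLoreti x) (hx : SmallestPeriod x m) (hm : 2 < m) :
    ∃ q y, m = 2 * q ∧ KomornikLoreti y ∧ SmallestPeriod y q := by
  obtain ⟨i, hne, heq⟩ : ∃ i, x (i + 1) ≠ x i ∧ x (i + 2) = x (i + 1) := by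
    by_contra! hprop
    have hne := hx.succ_ne hm.le hprop
    have hper : Function.Periodic x 2 := fun i =>
      (Bool.eq_not.mpr (hne (i + 1))).trans (Bool.eq_not.mpr (hne i) ▸ Bool.not_not _)
    exact hm.not_ge (hx.le_of_periodic two_pos hper)
  have hodd (j : ℕ) := h.ne_of_change_of_repeat j hne heq
  have htail : (fun j => x (i + 2 + j)) = double fun j => x (i + 2 + 2 * j) := by
    refine eq_double (fun j => rfl) fun j => Bool.eq_not.mpr ?_
    convert hodd j using 2 <;> ring_nf
  obtain ⟨q, rfl | rfl⟩ := Nat.even_or_odd' m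
  · exact ⟨q, _, rfl, (htail ▸ h.shift (i + 2)).of_double, (htail ▸ hx.shift (i + 2)).of_double⟩
  · have h1 := hx.periodic (i + 1)
    have h2 := hx.periodic (i + 2)
    rw [← heq, ← h2] at h1
    refine absurd ?_ (hodd q)
    convert h1.symm using 2 <;> ring

lemma exists_eq_two_pow (h : KomornikLoreti x) (hx : SmallestPeriod x m) : ∃ n, m = 2 ^ n := by
  induction m using Nat.strong_induction_on generalizing x with
  | _ m ih =>
    rcases le_or_gt m 2 with hm | hm
    · have := hx.1
      interval_cases m
      exacts [⟨0, rfl⟩, ⟨1, rfl⟩]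
    · obtain ⟨q, y, rfl, hy, hyq⟩ := h.exists_half hx hm
      obtain ⟨n, rfl⟩ := ih q (by omega) hy hyq
      exact ⟨n + 1, by ring⟩

end KomornikLoreti

/-! ### The sequence `λ` -/

section Interleave

variable {A : Type*} {f g h : ℕ → A}

/-- The sequence `f 0, g 0, h 0, f 1, g 1, h 1, …`. -/
def interleave (f g h : ℕ → A) : ℕ → A := fun i =>
  if i % 3 = 0 then f (i / 3) else if i % 3 = 1 then g (i / 3) else h (i / 3)

lemma interleave_zero (f g h : ℕ → A) (j : ℕ) : interleave f g h (3 * j) = f j := by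
  simp [interleave]

lemma interleave_one (f g h : ℕ → A) (j : ℕ) : interleave f g h (3 * j + 1) = g j := by
  have hdiv : (3 * j + 1) / 3 = j := by omega
  simp [interleave, hdiv]

lemma interleave_two (f g h : ℕ → A) (j : ℕ) : interleave f g h (3 * j + 2) = h j := by
  have hdiv : (3 * j + 2) / 3 = j := by omega
  simp [interleave, hdiv]

lemma exists_eq_three_mul (i : ℕ) : ∃ j, i = 3 * j ∨ i = 3 * j + 1 ∨ i = 3 * j + 2 :=
  ⟨i / 3, by omega⟩

lemma eq_interleave {x : ℕ → A} (h0 : ∀ j, x (3 * j) = f j) (h1 : ∀ j, x (3 * j + 1) = g j)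
    (h2 : ∀ j, x (3 * j + 2) = h j) : x = interleave f g h := by
  funext i
  obtain ⟨j, rfl | rfl | rfl⟩ := exists_eq_three_mul i
  · rw [h0, interleave_zero]
  · rw [h1, interleave_one]
  · rw [h2, interleave_two]

end Interleave

section Triple

variable {y z : ℕ → Bool}

/-- The 0-1 sequence whose `j`-th triple is `(1 - y_j, 0, y_{j+1})`. Both `λ` and the occurrences of
a letter in a univoque coding have this form. -/
def triple (y : ℕ → Bool) : ℕ → ℕ :=
  interleave (fun j => (!y j).toNat) (fun _ => 0) fun j => (y (j + 1)).toNat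

lemma triple_zero (y : ℕ → Bool) (j : ℕ) : triple y (3 * j) = (!y j).toNat :=
  interleave_zero ..

lemma triple_one (y : ℕ → Bool) (j : ℕ) : triple y (3 * j + 1) = 0 := interleave_one ..

lemma triple_two (y : ℕ → Bool) (j : ℕ) : triple y (3 * j + 2) = (y (j + 1)).toNat :=
  interleave_two ..

lemma triple_le_one (y : ℕ → Bool) (i : ℕ) : triple y i ≤ 1 := by
  obtain ⟨j, rfl | rfl | rfl⟩ := exists_eq_three_mul i
  · exact triple_zero y j ▸ Bool.toNat_le _
  · exact triple_one y j ▸ zero_le_one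
  · exact triple_two y j ▸ Bool.toNat_le _

lemma toLex_triple_lt (h0 : y 0 = z 0) (h : toLex y < toLex z) :
    toLex (triple y) < toLex (triple z) := by
  obtain ⟨m, heq, hlt⟩ := h
  simp only [Pi.toLex_apply] at heq hlt
  obtain _ | m := m
  · exact absurd h0 hlt.ne
  refine ⟨3 * m + 2, fun i hi => ?_, ?_⟩
  · simp only [Pi.toLex_apply]
    obtain ⟨j, rfl | rfl | rfl⟩ := exists_eq_three_mul i
    · rw [triple_zero, triple_zero, heq j (by omega)]
    · rw [triple_one, triple_one]
    · rw [triple_two, triple_two, heq (j + 1) (by omega)]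
  · simp only [Pi.toLex_apply, triple_two]
    obtain ⟨hy, hz⟩ := Bool.lt_iff.mp hlt
    rw [hy, hz]
    exact zero_lt_one

lemma toLex_triple_le_iff (h0 : y 0 = z 0) :
    toLex (triple y) ≤ toLex (triple z) ↔ toLex y ≤ toLex z := by
  refine ⟨fun h => ?_, fun h => ?_⟩
  · contrapose! h
    exact toLex_triple_lt h0.symm h
  · rcases h.eq_or_lt with h | h
    · rw [toLex_inj.mp h]
    · exact (toLex_triple_lt h0 h).le

end Triple

lemma triple_thueMorse_add {n i : ℕ} (hi : i < 3 * 2 ^ n) :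
    triple thueMorse (3 * 2 ^ n + i) =
      if i + 1 = 3 * 2 ^ n then 1
      else if i % 3 = 1 then triple thueMorse i else 1 - triple thueMorse i := by
  obtain ⟨j, rfl | rfl | rfl⟩ := exists_eq_three_mul i
  · have hj : j < 2 ^ n := by omega
    rw [if_neg (by omega), if_neg (by omega), ← mul_add, triple_zero, triple_zero,
      thueMorse_two_pow_add hj]
    cases thueMorse j <;> rfl
  · rw [if_neg (by omega), if_pos (by omega), ← add_assoc, ← mul_add, triple_one, triple_one]
  · rw [← add_assoc, ← mul_add, triple_two, triple_two, add_assoc]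
    split_ifs with hlast hmod
    · rw [show 2 ^ n + (j + 1) = 2 ^ (n + 1) by omega, thueMorse_two_pow, Bool.toNat_true]
    · omega
    · have hj : j + 1 < 2 ^ n := by omega
      rw [thueMorse_two_pow_add hj]
      cases thueMorse (j + 1) <;> rfl

lemma plusBlock_append {u v : List ℕ} (hv : v ≠ []) : plusBlock (u ++ v) = u ++ plusBlock v := by
  simp only [plusBlock, List.dropLast_append_of_ne_nil hv, List.append_assoc]

lemma plusBlock_thetaBlock_map_range (n : ℕ) :
    plusBlock (thetaBlock ((List.range (3 * 2 ^ n)).map (triple thueMorse))) =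
      (List.range (3 * 2 ^ n)).map fun i => triple thueMorse (3 * 2 ^ n + i) := by
  have hpos : 0 < 3 * 2 ^ n := by positivity
  refine List.ext_getElem ?_ fun i h1 h2 => ?_
  · simp only [plusBlock, thetaBlock, List.length_append, List.length_dropLast,
      List.length_mapIdx, List.length_map, List.length_range, List.length_singleton]
    omega
  · have hi : i < 3 * 2 ^ n := by simpa using h2
    simp only [plusBlock, thetaBlock, List.getElem_append, List.length_dropLast,
      List.length_mapIdx, List.length_map, List.length_range, List.getElem_dropLast,
      List.getElem_mapIdx, List.getElem_map, List.getElem_range, List.getElem_singleton,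
      triple_thueMorse_add hi]
    grind

lemma plusBlock_tB (n : ℕ) :
    plusBlock (tB n) = (List.range (3 * 2 ^ n)).map (triple thueMorse) := by
  induction n with
  | zero => simp [plusBlock, tB, List.range_succ, triple, interleave, thueMorse]
  | succ n ih =>
    have hne : thetaBlock ((List.range (3 * 2 ^ n)).map (triple thueMorse)) ≠ [] := by
      simp [thetaBlock]
    rw [tB, ih, plusBlock_append hne, plusBlock_thetaBlock_map_range, pow_succ, ← mul_assoc,
      mul_two, List.range_add, List.map_append, List.map_map]
    rfl

lemma lamSeq_eq_triple_thueMorse : lamSeq = triple thueMorse := by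
  funext i
  have hi : i < 3 * 2 ^ i := by
    have := Nat.lt_two_pow_self (n := i)
    omega
  rw [lamSeq, tB, plusBlock_tB, List.getD_append _ _ _ _ (by simpa using hi)]
  simp [hi]

lemma lamSeq_le_one (i : ℕ) : lamSeq i ≤ 1 := lamSeq_eq_triple_thueMorse ▸ triple_le_one _ i

section InitialDigits

variable {a : ℕ → ℕ}

lemma toLex_le_lamSeq_of_zero (h0 : a 0 = 0) : toLex a ≤ toLex lamSeq := by
  refine le_of_lt ⟨0, fun j hj => absurd hj (Nat.not_lt_zero j), ?_⟩
  simp only [Pi.toLex_apply, h0]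
  decide

lemma toLex_le_lamSeq_of_one_zero_zero (h0 : a 0 = 1) (h1 : a 1 = 0) (h2 : a 2 = 0) :
    toLex a ≤ toLex lamSeq := by
  refine le_of_lt ⟨2, fun j hj => ?_, ?_⟩
  · interval_cases j <;> simp only [Pi.toLex_apply, h0, h1] <;> decide
  · simp only [Pi.toLex_apply, h2]
    decide

end InitialDigits

lemma triple_add_three_mul (y : ℕ → Bool) (j : ℕ) :
    (fun i => triple y (3 * j + i)) = triple fun i => y (j + i) := by
  refine eq_interleave (fun c => ?_) (fun c => ?_) fun c => ?_
  · rw [← mul_add, triple_zero]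
  · rw [← add_assoc, ← mul_add, triple_one]
  · rw [← add_assoc, ← mul_add, triple_two, add_assoc]

lemma toLex_lamSeq_add_le (n : ℕ) : toLex (fun i => lamSeq (n + i)) ≤ toLex lamSeq := by
  obtain ⟨a, rfl | rfl | rfl⟩ := exists_eq_three_mul n
  · cases ha : thueMorse a with
    | true =>
      refine toLex_le_lamSeq_of_zero ?_
      rw [lamSeq_eq_triple_thueMorse, add_zero, triple_zero, ha, Bool.not_true, Bool.toNat_false]
    | false =>
      have htail : (fun i => thueMorse (a + i)) = normTail thueMorse a := by
        funext j
        simp only [normTail, ha, Bool.xor_false]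
      rw [lamSeq_eq_triple_thueMorse, triple_add_three_mul, htail,
        toLex_triple_le_iff (normTail_zero _ _)]
      exact toLex_normTail_thueMorse_le a
  · exact toLex_le_lamSeq_of_zero (lamSeq_eq_triple_thueMorse ▸ triple_one _ _)
  · cases ha : thueMorse (a + 1) with
    | false =>
      refine toLex_le_lamSeq_of_zero ?_
      rw [lamSeq_eq_triple_thueMorse, add_zero, triple_two, ha, Bool.toNat_false]
    | true =>
      refine toLex_le_lamSeq_of_one_zero_zero ?_ ?_ ?_
      · rw [lamSeq_eq_triple_thueMorse, add_zero, triple_two, ha, Bool.toNat_true]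
      · rw [lamSeq_eq_triple_thueMorse, add_assoc, ← mul_add_one 3 a, triple_zero, ha,
          Bool.not_true, Bool.toNat_false]
      · rw [lamSeq_eq_triple_thueMorse]
        exact triple_one _ (a + 1)

/-! ### Univoque words over three letters -/

section Occ

variable {A : Type*} [DecidableEq A]

/-- The 0-1 sequence marking the occurrences of the letter `l` in the word `w`. -/
def occ (w : ℕ → A) (l : A) : ℕ → ℕ := fun i => if w i = l then 1 else 0

lemma occ_le_one (w : ℕ → A) (l : A) (i : ℕ) : occ w l i ≤ 1 := by
  unfold occ
  split_ifs <;> simp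

lemma occ_eq_one_iff {w : ℕ → A} {l : A} {i : ℕ} : occ w l i = 1 ↔ w i = l := by simp [occ]

/-- The lexicographic form of univoqueness: after a letter other than `l`, the occurrences of `l`
form a sequence that is at most `λ`. -/
def LexUnivoque (w : ℕ → A) : Prop :=
  ∀ n l, w n ≠ l → toLex (occ (fun i => w (n + 1 + i)) l) ≤ toLex lamSeq

/-- From every position on, the occurrences of the letter standing there form a sequence that is at
most `λ`. -/
def ReturnBounded (w : ℕ → A) : Prop :=
  ∀ n, toLex (occ (fun i => w (n + i)) (w n)) ≤ toLex lamSeq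

variable {w : ℕ → A} {k n : ℕ}

lemma LexUnivoque.succ_ne (h : LexUnivoque w) (hw : SmallestPeriod w k) (hk : 2 ≤ k) :
    ∀ i, w (i + 1) ≠ w i := by
  refine hw.succ_ne hk fun i hi heq => ?_
  have hle : occ (fun j => w (i + 1 + j)) (w (i + 1)) 1 ≤ lamSeq 1 := by
    refine Pi.apply_le_of_toLex (h i _ hi.symm) fun j hj => ?_
    obtain rfl : j = 0 := by omega
    exact occ_eq_one_iff.mpr rfl
  have hone : occ (fun j => w (i + 1 + j)) (w (i + 1)) 1 = 1 := occ_eq_one_iff.mpr heq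
  exact absurd (hone ▸ hle) (by decide)

lemma LexUnivoque.returnBounded (h : LexUnivoque w) (hw : SmallestPeriod w k) (hk : 2 ≤ k) :
    ReturnBounded w := fun n => by
  have hsucc (i : ℕ) : n + (k - 1) + 1 + i = n + i + k := by omega
  have hprev : w (n + (k - 1)) ≠ w n := by
    rw [← hw.periodic n, ← add_zero n, ← hsucc 0, add_zero]
    exact (h.succ_ne hw hk _).symm
  simpa only [hsucc, hw.periodic _] using h _ _ hprev

lemma ReturnBounded.shift (h : ReturnBounded w) (c : ℕ) : ReturnBounded fun i => w (c + i) :=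
  fun n => by simpa only [add_assoc] using h (c + n)

lemma ReturnBounded.apply_add_ne_of_initial (h : ReturnBounded w) {m : ℕ} (hm : lamSeq m = 0)
    (hpre : ∀ j < m, (w (n + j) = w n ↔ lamSeq j = 1)) : w (n + m) ≠ w n := by
  intro heq
  have hle : occ (fun i => w (n + i)) (w n) m ≤ lamSeq m := by
    refine Pi.apply_le_of_toLex (h n) fun j hj => ?_
    have h1 := lamSeq_le_one j
    have h2 := hpre j hj
    unfold occ
    grind
  have hone : occ (fun i => w (n + i)) (w n) m = 1 := occ_eq_one_iff.mpr heq
  omega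

end Occ

section Returns

variable {w : ℕ → Fin 3} {n : ℕ}

lemma ReturnBounded.add_four_ne (h : ReturnBounded w) (hne : ∀ i, w (i + 1) ≠ w i)
    (hn : w (n + 2) = w n) : w (n + 4) ≠ w n := by
  have h3 := hne (n + 2)
  refine h.apply_add_ne_of_initial (by decide) fun j hj => ?_
  interval_cases j
  · exact iff_of_true rfl rfl
  · exact iff_of_false (hne n) (by decide)
  · exact iff_of_true hn rfl
  · exact iff_of_false (hn ▸ h3) (by decide)

lemma ReturnBounded.add_seven_ne_and_add_eight_ne (h : ReturnBounded w)
    (hne : ∀ i, w (i + 1) ≠ w i) (hn : w (n + 2) = w n) (h5 : w (n + 5) = w n) :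
    w (n + 7) ≠ w n ∧ w (n + 8) ≠ w n := by
  have hpre : ∀ j < 7, (w (n + j) = w n ↔ lamSeq j = 1) := fun j hj => by
    interval_cases j
    · exact iff_of_true rfl rfl
    · exact iff_of_false (hne n) (by decide)
    · exact iff_of_true hn rfl
    · exact iff_of_false (hn ▸ hne (n + 2)) (by decide)
    · exact iff_of_false (h.add_four_ne hne hn) (by decide)
    · exact iff_of_true h5 rfl
    · exact iff_of_false (h5 ▸ hne (n + 5)) (by decide)
  have h7 : w (n + 7) ≠ w n := h.apply_add_ne_of_initial (by decide) hpre
  refine ⟨h7, h.apply_add_ne_of_initial (by decide) fun j hj => ?_⟩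
  rcases Nat.lt_succ_iff_lt_or_eq.mp hj with hj | rfl
  · exact hpre j hj
  · exact iff_of_false h7 (by decide)

lemma ReturnBounded.exists_return (h : ReturnBounded w) (hne : ∀ i, w (i + 1) ≠ w i)
    (hn : w (n + 2) = w n) :
    w (n + 5) = w (n + 3) ∨ w (n + 7) ≠ w (n + 5) ∧ w (n + 8) = w (n + 6) := by
  rw [or_iff_not_imp_left]
  intro h53
  have h4 := h.add_four_ne hne hn
  have h5 : w (n + 5) = w n := by
    have := hne (n + 2); have := hne (n + 3); have := hne (n + 4)
    grind
  have h78 := h.add_seven_ne_and_add_eight_ne hne hn h5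
  have := hne (n + 5); have := hne (n + 6); have := hne (n + 7)
  grind

end Returns

section ReturnPattern

variable {R : ℕ → Prop} {n : ℕ}

lemma not_succ_of_return (h2 : ∀ n, R n → ¬R (n + 2))
    (h36 : ∀ n, R n → R (n + 3) ∨ ¬R (n + 5) ∧ R (n + 6)) (hn : R n) : ¬R (n + 1) := by
  intro hn1
  have h3 : ¬R (n + 3) := h2 (n + 1) hn1
  obtain ⟨-, h6⟩ := (h36 n hn).resolve_left h3
  rcases h36 (n + 1) hn1 with h4 | ⟨h6', -⟩
  · exact h2 (n + 4) h4 h6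
  · exact h6' h6

lemma not_add_three_mul_of_return (h2 : ∀ n, R n → ¬R (n + 2))
    (h36 : ∀ n, R n → R (n + 3) ∨ ¬R (n + 5) ∧ R (n + 6)) (hn : R n) (j : ℕ) :
    ¬R (n + 3 * j + 1) ∧ ¬R (n + 3 * j + 2) := by
  induction j using Nat.strong_induction_on generalizing n with
  | _ j ih =>
    match j with
    | 0 => exact ⟨not_succ_of_return h2 h36 hn, h2 n hn⟩
    | 1 =>
      rcases h36 n hn with h3 | ⟨h5, h6⟩
      · exact ih 0 (by omega) h3
      · exact ⟨fun h4 => h2 (n + 4) h4 h6, h5⟩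
    | j + 2 =>
      rcases h36 n hn with h3 | ⟨-, h6⟩
      · have := ih (j + 1) (by omega) h3
        rwa [show n + 3 * (j + 2) = n + 3 + 3 * (j + 1) by ring]
      · have := ih j (by omega) h6
        rwa [show n + 3 * (j + 2) = n + 6 + 3 * j by ring]

end ReturnPattern

section TripleWord

variable {A : Type*} {a b c : A} {x : ℕ → Bool}

/-- The word whose `j`-th triple is `a b c` if `x j` is true and `a c b` otherwise. -/
def tripleWord (a b c : A) (x : ℕ → Bool) : ℕ → A :=
  interleave (fun _ => a) (fun j => if x j then b else c) fun j => if x j then c else b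

lemma tripleWord_zero (a b c : A) (x : ℕ → Bool) (j : ℕ) : tripleWord a b c x (3 * j) = a :=
  interleave_zero ..

lemma tripleWord_one (a b c : A) (x : ℕ → Bool) (j : ℕ) :
    tripleWord a b c x (3 * j + 1) = if x j then b else c := interleave_one ..

lemma tripleWord_two (a b c : A) (x : ℕ → Bool) (j : ℕ) :
    tripleWord a b c x (3 * j + 2) = if x j then c else b := interleave_two ..

lemma tripleWord_one_ne (hb : b ≠ a) (hc : c ≠ a) (j : ℕ) : tripleWord a b c x (3 * j + 1) ≠ a := by
  rw [tripleWord_one]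
  split_ifs <;> assumption

lemma tripleWord_two_ne (hb : b ≠ a) (hc : c ≠ a) (j : ℕ) : tripleWord a b c x (3 * j + 2) ≠ a := by
  rw [tripleWord_two]
  split_ifs <;> assumption

lemma periodic_tripleWord_of_periodic {p : ℕ} (hx : Function.Periodic x p) :
    Function.Periodic (tripleWord a b c x) (3 * p) := by
  intro i
  obtain ⟨j, rfl | rfl | rfl⟩ := exists_eq_three_mul i
  · rw [← mul_add, tripleWord_zero, tripleWord_zero]
  · rw [add_right_comm, ← mul_add, tripleWord_one, tripleWord_one, hx j]
  · rw [add_right_comm, ← mul_add, tripleWord_two, tripleWord_two, hx j]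

lemma SmallestPeriod.of_tripleWord {k : ℕ} (h : SmallestPeriod (tripleWord a b c x) k)
    (hb : b ≠ a) (hc : c ≠ a) (hbc : b ≠ c) : ∃ q, k = 3 * q ∧ SmallestPeriod x q := by
  have h0 : tripleWord a b c x k = a := by
    have := h.periodic (3 * 0)
    rwa [tripleWord_zero, mul_zero, zero_add] at this
  obtain ⟨q, rfl | rfl | rfl⟩ := exists_eq_three_mul k
  · refine ⟨q, rfl, Nat.pos_of_mul_pos_left h.1, fun j => ?_, fun p hp hpq => ?_⟩
    · have h1 := h.periodic (3 * j + 1)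
      rw [add_right_comm, ← mul_add, tripleWord_one, tripleWord_one] at h1
      grind
    · by_contra! hper
      have := h.le_of_periodic (by positivity) (periodic_tripleWord_of_periodic hper)
      omega
  · exact absurd h0 (tripleWord_one_ne hb hc q)
  · exact absurd h0 (tripleWord_two_ne hb hc q)

/-- The letter in position `3 * i + 2` is `c` or `b` according to `x i`; it recurs as the third
letter of later triples exactly where `x` takes the same value. -/
lemma occ_tripleWord [DecidableEq A] (hb : b ≠ a) (hc : c ≠ a) (hbc : b ≠ c) (i : ℕ) :
    occ (fun m => tripleWord a b c x (3 * i + 2 + m)) (tripleWord a b c x (3 * i + 2)) =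
      triple (normTail x i) := by
  refine eq_interleave (fun j => ?_) (fun j => ?_) fun j => ?_
  · rw [occ, add_right_comm, ← mul_add, tripleWord_two, tripleWord_two, normTail]
    cases x i <;> cases x (i + j) <;> simp [hbc, hbc.symm]
  · rw [occ, show 3 * i + 2 + (3 * j + 1) = 3 * (i + j + 1) by ring, tripleWord_zero,
      if_neg (tripleWord_two_ne hb hc i).symm]
  · rw [occ, show 3 * i + 2 + (3 * j + 2) = 3 * (i + (j + 1)) + 1 by ring, tripleWord_one,
      tripleWord_two, normTail]
    cases x i <;> cases x (i + (j + 1)) <;> simp [hbc, hbc.symm]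

lemma ReturnBounded.komornikLoreti [DecidableEq A] (h : ReturnBounded (tripleWord a b c x))
    (hb : b ≠ a) (hc : c ≠ a) (hbc : b ≠ c) : KomornikLoreti x := fun i => by
  rw [← toLex_triple_le_iff (normTail_zero x i), ← lamSeq_eq_triple_thueMorse,
    ← occ_tripleWord hb hc hbc]
  exact h (3 * i + 2)

lemma eq_tripleWord {w : ℕ → Fin 3} (hne : ∀ i, w (i + 1) ≠ w i)
    (h0 : ∀ j, w (3 * j + 2) ≠ w (3 * j)) (h1 : ∀ j, w (3 * j + 3) ≠ w (3 * j + 1)) :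
    w = tripleWord (w 0) (w 1) (w 2) fun j => decide (w (3 * j + 1) = w 1) := by
  have h01 := hne 0
  have h12 := hne 1
  have h02 := h0 0
  have hzero (j : ℕ) : w (3 * j) = w 0 := by
    induction j with
    | zero => rfl
    | succ j ih =>
      have := hne (3 * j); have := hne (3 * j + 1); have := hne (3 * j + 2)
      have := h0 j; have := h1 j
      grind
  refine eq_interleave hzero (fun j => ?_) fun j => ?_
  all_goals
    have := hzero j; have := hne (3 * j); have := hne (3 * j + 1); have := h0 j
    grind

end TripleWord

/-- Either no letter ever returns after two steps, and then the three letters alternate cyclically;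
or one such return locks the word into triples that are governed by a Komornik–Loreti sequence. -/
theorem LexUnivoque.exists_eq_three_mul_two_pow {w : ℕ → Fin 3} {k : ℕ} (h : LexUnivoque w)
    (hw : SmallestPeriod w k) (hk : 2 ≤ k) : ∃ n, k = 3 * 2 ^ n := by
  have hne := h.succ_ne hw hk
  have hret := h.returnBounded hw hk
  by_cases hex : ∃ n, w (n + 2) = w n
  · obtain ⟨n, hn⟩ := hex
    have hlock := not_add_three_mul_of_return (R := fun n => w (n + 2) = w n)
      (fun n hn heq => hret.add_four_ne hne hn (heq.trans hn))
      (fun n hn => hret.exists_return hne hn) hn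
    have h0 (j : ℕ) : w (n + 1 + (3 * j + 2)) ≠ w (n + 1 + 3 * j) := by
      convert (hlock j).1 using 2 <;> ring_nf
    have h1 (j : ℕ) : w (n + 1 + (3 * j + 3)) ≠ w (n + 1 + (3 * j + 1)) := by
      convert (hlock j).2 using 2 <;> ring_nf
    have hword := eq_tripleWord (w := fun i => w (n + 1 + i)) (fun i => hne (n + 1 + i)) h0 h1
    have hb := hne (n + 1)
    have hbc := (hne (n + 2)).symm
    obtain ⟨q, rfl, hq⟩ := (hword ▸ hw.shift (n + 1)).of_tripleWord hb (h0 0) hbc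
    have hKL := (hword ▸ hret.shift (n + 1)).komornikLoreti hb (h0 0) hbc
    obtain ⟨m, rfl⟩ := hKL.exists_eq_two_pow hq
    exact ⟨m, rfl⟩
  · push Not at hex
    have hper : Function.Periodic w 3 := fun i => by
      have := hne i; have := hne (i + 1); have := hne (i + 2)
      have := hex i; have := hex (i + 1)
      grind
    have hk3 := hw.le_of_periodic three_pos hper
    have hk2 : k ≠ 2 := fun hk => hex 0 (hk ▸ hw.periodic 0)
    exact ⟨0, by omega⟩

/-! ### Values of digit sequences -/

section Val

variable {β : ℝ} {a b : ℕ → ℕ} {M N : ℕ}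

/-- The value `∑ a_i β^{-i}` of a digit sequence in base `β` (0-indexed: `a i` is `a_{i+1}`). -/
def val (β : ℝ) (a : ℕ → ℕ) : ℝ := ∑' i, (a i : ℝ) / β ^ (i + 1)

lemma hasSum_div_pow_succ (hβ : 1 < β) (c : ℝ) :
    HasSum (fun i => c / β ^ (i + 1)) (c / (β - 1)) := by
  have hβ0 : β ≠ 0 := by positivity
  have hterm (i : ℕ) : c / β ^ (i + 1) = c / β * β⁻¹ ^ i := by
    rw [inv_pow, ← div_eq_mul_inv, div_div, pow_succ']
  have hsum : c / (β - 1) = c / β * (1 - β⁻¹)⁻¹ := by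
    rw [← div_eq_mul_inv, div_div, mul_one_sub, mul_inv_cancel₀ hβ0]
  simp only [hterm, hsum]
  exact (hasSum_geometric_of_lt_one (by positivity) (inv_lt_one_of_one_lt₀ hβ)).mul_left (c / β)

lemma summable_val (hβ : 1 < β) (ha : ∀ i, a i ≤ M) : Summable fun i => (a i : ℝ) / β ^ (i + 1) :=
  (hasSum_div_pow_succ hβ M).summable.of_nonneg_of_le (fun i => by positivity) fun i => by
    gcongr
    exact ha i

lemma val_nonneg (hβ : 1 < β) (a : ℕ → ℕ) : 0 ≤ val β a := tsum_nonneg fun i => by positivity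

lemma val_le (hβ : 1 < β) (ha : ∀ i, a i ≤ M) : val β a ≤ M / (β - 1) := by
  rw [← (hasSum_div_pow_succ hβ M).tsum_eq]
  refine (summable_val hβ ha).tsum_le_tsum (fun i => ?_) (hasSum_div_pow_succ hβ M).summable
  gcongr
  exact ha i

lemma val_lt (hβ : 1 < β) (ha : ∀ i, a i ≤ M) {i : ℕ} (hi : a i < M) : val β a < M / (β - 1) := by
  rw [← (hasSum_div_pow_succ hβ M).tsum_eq]
  refine (summable_val hβ ha).tsum_lt_tsum (i := i) (fun i => ?_) ?_
    (hasSum_div_pow_succ hβ M).summable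
  · gcongr
    exact ha i
  · gcongr

lemma val_le_val_of_le {β' : ℝ} (hβ : 1 < β) (hβ' : β ≤ β') (ha : ∀ i, a i ≤ M) :
    val β' a ≤ val β a := by
  refine (summable_val (hβ.trans_le hβ') ha).tsum_le_tsum (fun i => ?_) (summable_val hβ ha)
  gcongr

lemma val_eq_sum_add (hβ : 1 < β) (ha : ∀ i, a i ≤ M) (m : ℕ) :
    val β a =
      ∑ i ∈ Finset.range m, (a i : ℝ) / β ^ (i + 1) + val β (fun i => a (m + i)) / β ^ m := by
  rw [val, ← (summable_val hβ ha).sum_add_tsum_nat_add m, val, ← tsum_div_const]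
  congr 2
  funext i
  rw [div_div, ← pow_add, add_comm i m, add_comm (i + 1), add_assoc]

lemma val_eq_div (hβ : 1 < β) (ha : ∀ i, a i ≤ M) :
    val β a = (a 0 + val β fun i => a (1 + i)) / β := by
  rw [val_eq_sum_add hβ ha 1, Finset.sum_range_one, zero_add, pow_one, add_div]

lemma val_sub_val_eq (hβ : 1 < β) (ha : ∀ i, a i ≤ M) (hb : ∀ i, b i ≤ N) {m : ℕ}
    (hab : ∀ j < m, a j = b j) :
    val β a - val β b = ((a m - b m : ℝ) +
      ((val β fun i => a (m + 1 + i)) - val β fun i => b (m + 1 + i))) / β ^ (m + 1) := by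
  have hsum : ∑ i ∈ Finset.range m, (a i : ℝ) / β ^ (i + 1) =
      ∑ i ∈ Finset.range m, (b i : ℝ) / β ^ (i + 1) :=
    Finset.sum_congr rfl fun j hj => by rw [hab j (Finset.mem_range.mp hj)]
  rw [val_eq_sum_add hβ ha (m + 1), val_eq_sum_add hβ hb (m + 1), Finset.sum_range_succ,
    Finset.sum_range_succ, hsum]
  ring

lemma val_sub_val_le_of_lex_lt (hβ : 1 < β) (ha : ∀ i, a i ≤ M) (hb : ∀ i, b i ≤ N) {m : ℕ}
    (hab : ∀ j < m, a j = b j) (hm : a m < b m) :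
    val β a - val β b ≤ ((val β fun i => a (m + 1 + i)) - 1) / β ^ (m + 1) := by
  have hdigit : (a m : ℝ) + 1 ≤ b m := mod_cast hm
  have htail := val_nonneg hβ fun i => b (m + 1 + i)
  rw [val_sub_val_eq hβ ha hb hab]
  gcongr
  linarith

/-- Parry's argument: a lexicographically smaller tail can exceed `1` only if a later tail exceeds
`1` by at least `β` times as much, while the values of the tails are bounded. -/
theorem val_tail_le_one (hβ : 1 < β) (ha : ∀ i, a i ≤ M) (h1 : val β a ≤ 1)
    (hlex : ∀ n, toLex (fun i => a (n + i)) ≤ toLex a) (n : ℕ) :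
    val β (fun i => a (n + i)) ≤ 1 := by
  have hbdd : BddAbove (range fun n => val β fun i => a (n + i)) :=
    ⟨M / (β - 1), by rintro _ ⟨n, rfl⟩; exact val_le hβ fun i => ha (n + i)⟩
  set S := ⨆ n, val β fun i => a (n + i)
  have hS (n : ℕ) : val β (fun i => a (n + i)) ≤ S := le_ciSup hbdd n
  by_contra! hn
  have hS1 : 0 < S - 1 := by linarith [hS n]
  have hstep (n : ℕ) : val β (fun i => a (n + i)) ≤ 1 + (S - 1) / β := by
    rcases (hlex n).eq_or_lt with heq | ⟨m, heq, hlt⟩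
    · rw [toLex_inj.mp heq]
      have : 0 < (S - 1) / β := by positivity
      linarith
    · have hdiff := val_sub_val_le_of_lex_lt hβ (fun i => ha (n + i)) ha heq hlt
      have hnext : (val β fun i => a (n + (m + 1 + i))) ≤ S := by
        simpa only [add_assoc] using hS (n + (m + 1))
      have hpow : β ≤ β ^ (m + 1) := le_self_pow₀ hβ.le m.succ_ne_zero
      have : ((val β fun i => a (n + (m + 1 + i))) - 1) / β ^ (m + 1) ≤ (S - 1) / β := by
        calc _ ≤ (S - 1) / β ^ (m + 1) := by gcongr
          _ ≤ (S - 1) / β := by gcongr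
      linarith
  have hle : S ≤ 1 + (S - 1) / β := ciSup_le hstep
  have : (S - 1) / β < S - 1 := div_lt_self hS1 hβ
  linarith

theorem toLex_le_of_val_lt_one {β' : ℝ} (hβ : 1 < β) (hβ' : β ≤ β') (ha : ∀ i, a i ≤ M)
    (h1 : val β' a = 1) (hlex : ∀ n, toLex (fun i => a (n + i)) ≤ toLex a) (hb : ∀ i, b i ≤ N)
    (hval : val β b < 1) : toLex b ≤ toLex a := by
  by_contra! hlt
  obtain ⟨m, heq, hm⟩ := hlt
  have hβ1 := hβ.trans_le hβ'
  have hdiff := val_sub_val_le_of_lex_lt hβ1 ha hb heq hm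
  have htail := val_tail_le_one hβ1 ha h1.le hlex (m + 1)
  have : ((val β' fun i => a (m + 1 + i)) - 1) / β' ^ (m + 1) ≤ 0 :=
    div_nonpos_of_nonpos_of_nonneg (by linarith) (by positivity)
  have hbase := val_le_val_of_le hβ hβ' hb
  linarith

end Val

/-! ### The overlap region in barycentric coordinates -/

section Geometry

variable {β : ℝ} {x : ℝ × ℝ} {w : ℕ → Fin 3}

/-- The digits of `Ω`, ordered so that the letters `0` and `1` stand for the unit vectors. -/
def digit : Fin 3 → ℝ × ℝ := ![(1, 0), (0, 1), (0, 0)]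

/-- The barycentric coordinates of a point with respect to the vertices `(β - 1)⁻¹ • digit l` of
`Δ_β`, scaled so that they sum to `1 / (β - 1)`. -/
def bary (β : ℝ) (x : ℝ × ℝ) : Fin 3 → ℝ := ![x.1, x.2, 1 / (β - 1) - x.1 - x.2]

lemma digit_injective : Function.Injective digit := by
  intro a b hab
  fin_cases a <;> fin_cases b <;> simp [digit] at hab ⊢

lemma range_digit : range digit = OmegaR := by
  ext x
  simp only [mem_range, Fin.exists_fin_succ, digit, OmegaR, mem_insert_iff, mem_singleton_iff,
    Matrix.cons_val_zero, Matrix.cons_val_succ, IsEmpty.exists_iff, or_false]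
  tauto

lemma sum_bary_smul_digit : ∑ l, bary β x l • digit l = x := by
  ext <;> simp [Fin.sum_univ_three, bary, digit]

lemma sum_bary : ∑ l, bary β x l = 1 / (β - 1) := by
  simp only [Fin.sum_univ_three, bary, Matrix.cons_val]
  ring

lemma convex_setOf_bary_nonneg (β : ℝ) : Convex ℝ {x | ∀ l, 0 ≤ bary β x l} := by
  intro x hx y hy s t hs ht hst l
  have haff : bary β (s • x + t • y) l = s * bary β x l + t * bary β y l := by
    fin_cases l
    · simp [bary]
    · simp [bary]
    · simp only [bary, Fin.reduceFinMk, Matrix.cons_val, Prod.fst_add, Prod.snd_add, Prod.smul_fst,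
        Prod.smul_snd, smul_eq_mul]
      linear_combination (-1 / (β - 1)) * hst
  rw [haff]
  exact add_nonneg (mul_nonneg hs (hx l)) (mul_nonneg ht (hy l))

lemma sum_val_occ (hβ : 1 < β) (w : ℕ → Fin 3) : ∑ l, val β (occ w l) = 1 / (β - 1) := by
  simp only [val]
  rw [← (hasSum_div_pow_succ hβ 1).tsum_eq,
    ← Summable.tsum_finsetSum fun l _ => summable_val hβ (occ_le_one w l)]
  simp only [occ, Nat.cast_ite, Nat.cast_one, Nat.cast_zero, ← Finset.sum_div, Finset.sum_ite_eq,
    Finset.mem_univ, if_true]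

lemma bary_tsum_digit (hβ : 1 < β) (w : ℕ → Fin 3) (l : Fin 3) :
    bary β (∑' i, (β ^ (i + 1))⁻¹ • digit (w i)) l = val β (occ w l) := by
  have hpoint : ∑' i, (β ^ (i + 1))⁻¹ • digit (w i) = (val β (occ w 0), val β (occ w 1)) := by
    have hsum := (summable_val hβ (occ_le_one w 0)).hasSum.prodMk
      (summable_val hβ (occ_le_one w 1)).hasSum
    refine Eq.trans (tsum_congr fun i => ?_) hsum.tsum_eq
    generalize hi : w i = c
    fin_cases c <;> simp [occ, hi, digit]
  have htotal := sum_val_occ hβ w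
  rw [Fin.sum_univ_three] at htotal
  rw [hpoint]
  fin_cases l
  · rfl
  · rfl
  · simp only [bary, Fin.reduceFinMk, Matrix.cons_val]
    linarith

lemma mem_Delta_iff (hβ : 1 < β) : x ∈ Delta β ↔ ∀ l, 0 ≤ bary β x l := by
  constructor
  · refine fun hx => convexHull_min ?_ (convex_setOf_bary_nonneg β) hx
    rintro _ ⟨d, hd, rfl⟩ l
    simp only [← range_digit, mem_range] at hd
    choose w hw using hd
    simp only [← hw, bary_tsum_digit hβ]
    exact val_nonneg hβ _
  · intro hx
    have hβ1 : 0 < β - 1 := sub_pos.mpr hβ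
    have hvertex (l : Fin 3) : (1 / (β - 1)) • digit l ∈ Delta β := by
      refine subset_convexHull ℝ _ ⟨fun _ => digit l, fun _ => range_digit ▸ mem_range_self l, ?_⟩
      simpa only [one_div] using ((hasSum_div_pow_succ hβ 1).smul_const (digit l)).tsum_eq.symm
    have hcomb : ∑ l, ((β - 1) * bary β x l) • (1 / (β - 1)) • digit l ∈ Delta β := by
      refine (convex_convexHull ℝ _).sum_mem (fun l _ => mul_nonneg hβ1.le (hx l)) ?_
        fun l _ => hvertex l
      rw [← Finset.mul_sum, sum_bary, mul_one_div_cancel hβ1.ne']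
    have hscale (l : Fin 3) :
        ((β - 1) * bary β x l) • (1 / (β - 1)) • digit l = bary β x l • digit l := by
      rw [smul_smul, mul_right_comm, mul_one_div_cancel hβ1.ne', one_mul]
    simpa only [hscale, sum_bary_smul_digit] using hcomb

lemma bary_smul_sub_digit (hβ : 1 < β) (x : ℝ × ℝ) (c l : Fin 3) :
    bary β (β • x - digit c) l = β * bary β x l - if c = l then 1 else 0 := by
  have hβ1 : β - 1 ≠ 0 := by linarith
  have hfix : 1 / (β - 1) = β * (1 / (β - 1)) - 1 := by
    rw [mul_one_div, div_sub_one hβ1, sub_sub_cancel]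
  fin_cases l <;> fin_cases c <;>
    simp only [bary, digit, Fin.reduceFinMk, Fin.zero_eta, Fin.mk_one, Fin.reduceEq, zero_ne_one,
      one_ne_zero, reduceIte, Matrix.cons_val, Prod.fst_sub, Prod.snd_sub, Prod.smul_fst,
      Prod.smul_snd, smul_eq_mul] <;>
    linarith

lemma mem_fmap_image_iff (hβ : 1 < β) {c : ℝ × ℝ} :
    x ∈ fmap β c '' Delta β ↔ β • x - c ∈ Delta β := by
  have hβ0 : β ≠ 0 := by positivity
  constructor
  · rintro ⟨y, hy, rfl⟩
    rwa [fmap, smul_inv_smul₀ hβ0, add_sub_cancel_right]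
  · exact fun h => ⟨_, h, by rw [fmap, sub_add_cancel, inv_smul_smul₀ hβ0]⟩

lemma mem_fmap_digit_image_iff (hβ : 1 < β) (hx : x ∈ Delta β) (c : Fin 3) :
    x ∈ fmap β (digit c) '' Delta β ↔ 1 ≤ β * bary β x c := by
  simp only [mem_fmap_image_iff hβ, mem_Delta_iff hβ, bary_smul_sub_digit hβ]
  refine ⟨fun h => by simpa only [if_true, sub_nonneg] using h c, fun h l => ?_⟩
  split_ifs with hcl
  · rwa [sub_nonneg, ← hcl]
  · rw [sub_zero]
    exact mul_nonneg (by positivity) ((mem_Delta_iff hβ).mp hx l)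

lemma mem_Ofat_iff (hβ : 1 < β) (hx : x ∈ Delta β) :
    x ∈ Ofat β ↔ ∃ c d, c ≠ d ∧ 1 ≤ β * bary β x c ∧ 1 ≤ β * bary β x d := by
  simp only [Ofat, ← range_digit, mem_iUnion, exists_prop, exists_range_iff, mem_inter_iff,
    digit_injective.ne_iff, mem_fmap_digit_image_iff hβ hx]

lemma mul_val_occ (hβ : 1 < β) (w : ℕ → Fin 3) (l : Fin 3) :
    β * val β (occ w l) = (if w 0 = l then 1 else 0) + val β (occ (fun i => w (1 + i)) l) := by
  rw [val_eq_div hβ (occ_le_one w l), mul_div_cancel₀ _ (by positivity), occ, Nat.cast_ite,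
    Nat.cast_one, Nat.cast_zero]
  rfl

lemma tsum_digit_mem_Ofat_iff (hβ : 1 < β) (w : ℕ → Fin 3) :
    ∑' i, (β ^ (i + 1))⁻¹ • digit (w i) ∈ Ofat β ↔
      ∃ l, w 0 ≠ l ∧ 1 ≤ val β (occ (fun i => w (1 + i)) l) := by
  have hmem : ∑' i, (β ^ (i + 1))⁻¹ • digit (w i) ∈ Delta β :=
    subset_convexHull ℝ _ ⟨_, fun i => range_digit ▸ mem_range_self (w i), rfl⟩
  have htail (l : Fin 3) := val_nonneg hβ (occ (fun i => w (1 + i)) l)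
  simp only [mem_Ofat_iff hβ hmem, bary_tsum_digit hβ, mul_val_occ hβ]
  constructor
  · rintro ⟨c, d, hcd, hc, hd⟩
    by_cases h : w 0 = c
    · exact ⟨d, h ▸ hcd, by simpa only [if_neg (h ▸ hcd : w 0 ≠ d), zero_add] using hd⟩
    · exact ⟨c, h, by simpa only [if_neg h, zero_add] using hc⟩
  · rintro ⟨l, hl, hval⟩
    exact ⟨w 0, l, hl, by simpa only [if_true, le_add_iff_nonneg_right] using htail (w 0),
      by simpa only [if_neg hl, zero_add] using hval⟩

theorem digit_comp_mem_Ufat_iff (hβ : 1 < β) :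
    (fun i => digit (w i)) ∈ Ufat β ↔
      ∀ n l, w n ≠ l → val β (occ (fun i => w (n + 1 + i)) l) < 1 := by
  have hdigit (i : ℕ) : digit (w i) ∈ OmegaR := range_digit ▸ mem_range_self (w i)
  simp only [Ufat, mem_ofPred_eq, hdigit, implies_true, true_and,
    tsum_digit_mem_Ofat_iff hβ fun i => w (_ + i), not_exists, not_and, not_le, add_zero, add_assoc]

lemma digit_comp_mem_Ufat_two {k : ℕ} (hw : SmallestPeriod w k) (hk : 2 ≤ k) :
    (fun i => digit (w i)) ∈ Ufat 2 := by
  refine (digit_comp_mem_Ufat_iff one_lt_two).mpr fun n l _ => ?_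
  obtain ⟨i, hi⟩ := hw.exists_ne hk (n + 1) l
  have hocc : occ (fun i => w (n + 1 + i)) l i < 1 := by simp only [occ, if_neg hi, zero_lt_one]
  refine (val_lt one_lt_two (occ_le_one _ l) hocc).trans_eq ?_
  norm_num

lemma exists_mem_Ufat_two_smallestPeriod {k : ℕ} (hk : 2 ≤ k) :
    ∃ d ∈ Ufat 2, SmallestPeriod d k := by
  have hw : SmallestPeriod (fun i => if k ∣ i then (0 : Fin 3) else 1) k :=
    smallestPeriod_ite_dvd zero_ne_one (by lia)
  exact ⟨_, digit_comp_mem_Ufat_two hw hk, (smallestPeriod_comp_iff digit_injective).mpr hw⟩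

lemma lexUnivoque_of_digit_comp_mem_Ufat {bc : ℝ} (hbc : SumsToOne bc lamSeq) (hβ : 1 < β)
    (hβbc : β ≤ bc) (hU : (fun i => digit (w i)) ∈ Ufat β) : LexUnivoque w := fun n l hl =>
  toLex_le_of_val_lt_one hβ hβbc lamSeq_le_one hbc toLex_lamSeq_add_le (occ_le_one _ l)
    ((digit_comp_mem_Ufat_iff hβ).mp hU n l hl)

theorem exists_eq_three_mul_two_pow_of_mem_Ufat {bc : ℝ} (hbc : SumsToOne bc lamSeq) (hβ : 1 < β)
    (hβbc : β ≤ bc) {d : ℕ → ℝ × ℝ} (hd : d ∈ Ufat β) {k : ℕ} (hk : 2 ≤ k)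
    (hperiod : SmallestPeriod d k) : ∃ n, k = 3 * 2 ^ n := by
  have hrange : ∀ i, ∃ l, digit l = d i := fun i => by
    simpa only [← range_digit, mem_range] using hd.1 i
  choose w hw using hrange
  obtain rfl : (fun i => digit (w i)) = d := funext hw
  exact (lexUnivoque_of_digit_comp_mem_Ufat hbc hβ hβbc hd).exists_eq_three_mul_two_pow
    ((smallestPeriod_comp_iff digit_injective).mp hperiod) hk

end Geometry

/-- For every k ≥ 2 not of the form 3·2ⁿ, one has β_k ≥ β_c. -/
theorem stmt12 (k : ℕ) (hk : 2 ≤ k) (hnot : ¬ ∃ n : ℕ, k = 3 * 2 ^ n)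
    (bc : ℝ) (hbc : FatSierpinski.IsBetaC bc) :
    bc ≤ FatSierpinski.betaK k := by
  refine le_csInf ⟨2, right_mem_Ioc.mpr one_lt_two, exists_mem_Ufat_two_smallestPeriod hk⟩ ?_
  rintro β ⟨⟨hβ, -⟩, d, hd, hperiod⟩
  by_contra! hlt
  exact hnot (exists_eq_three_mul_two_pow_of_mem_Ufat hbc.2 hβ hlt.le hd hk hperiod)

end FatSierpinski
end
end

section
/- For every k ∈ ℕ, β_k ≤ (1+√5)/2. Equivalently, for every β ∈ (1,2] with β > (1+√5)/2 and every k ∈ ℕ, the set 𝐔_β contains a sequence of smallest period k. -/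
open Filter Set

noncomputable section

namespace FatSierpinski

/-!
Relative to the triangle `Δ_β` a point has three barycentric coordinates, and the `j`-th coordinate
of `∑ d_i / β^i` is the base-`β` value of the 0-1 sequence marking the positions at which the `j`-th
digit is used. The piece `f_c(Δ_β)` lies where the coordinate belonging to `c` is at least `1 / β`,
so a coding is univoque as soon as, after every digit other than the `j`-th, the remaining `j`-th
0-1 sequence has value less than `1`. A 0-1 sequence without two consecutive ones has value at most
`β / (β² - 1)`, which is less than `1` exactly when `β² > β + 1`, that is, when `β` exceeds the
golden ratio. Hence every word over the three digits in which adjacent letters differ is univoque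
for all such `β`, and one of smallest period `k ≥ 2` repeats a block made of one letter followed by
the other two in alternation. For `k = 1` a constant word works: one of its 0-1 sequences is
constantly `1` and imposes no condition, the other two vanish.
-/

section RadixValue

variable {E : Type*} [NormedAddCommGroup E] [NormedSpace ℝ E] {β : ℝ}

/-- The value `∑_{i ≥ 1} e_i / β^i` of a digit sequence in base `β`; as in `Sfat`, the sequence is
0-indexed. -/
def radixValue (β : ℝ) (e : ℕ → E) : E := ∑' i : ℕ, (β ^ (i + 1))⁻¹ • e i

lemma summable_radix_of_norm_le [CompleteSpace E] (hβ : 1 < β) {e : ℕ → E} {C : ℝ}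
    (he : ∀ i, ‖e i‖ ≤ C) : Summable fun i ↦ (β ^ (i + 1))⁻¹ • e i := by
  have hgeom : Summable fun i : ℕ ↦ β⁻¹ ^ i :=
    summable_geometric_of_lt_one (by positivity) (inv_lt_one_of_one_lt₀ hβ)
  refine Summable.of_norm_bounded (((summable_nat_add_iff 1).2 hgeom).mul_right C) fun i ↦ ?_
  rw [norm_smul, inv_pow, Real.norm_of_nonneg (by positivity)]
  gcongr
  exact he i

lemma summable_radix_const [CompleteSpace E] (hβ : 1 < β) (c : E) :
    Summable fun i ↦ (β ^ (i + 1))⁻¹ • c :=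
  summable_radix_of_norm_le hβ fun _ ↦ le_refl ‖c‖

lemma smul_radixValue (hβ : β ≠ 0) {e : ℕ → E} (he : Summable fun i ↦ (β ^ (i + 1))⁻¹ • e i) :
    β • radixValue β e = e 0 + radixValue β fun i ↦ e (i + 1) := by
  rw [radixValue, he.tsum_eq_zero_add, smul_add, radixValue, ← tsum_const_smul'' β]
  congr 1
  · simp [smul_smul, hβ]
  · refine tsum_congr fun i ↦ ?_
    rw [smul_smul, pow_succ β (i + 1), mul_inv_rev, mul_inv_cancel_left₀ hβ]

lemma radixValue_const [CompleteSpace E] (hβ : 1 < β) (c : E) :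
    radixValue β (fun _ ↦ c) = (β - 1)⁻¹ • c := by
  have hrec := smul_radixValue (by positivity) (summable_radix_const hβ c)
  rw [eq_inv_smul_iff₀ (sub_pos.2 hβ).ne', sub_smul, one_smul, hrec, add_sub_cancel_right]

lemma radixValue_one (hβ : 1 < β) : radixValue β (fun _ ↦ (1 : ℝ)) = (β - 1)⁻¹ := by
  rw [radixValue_const hβ, smul_eq_mul, mul_one]

lemma radixValue_le_of_add_succ_le_one (hβ : 1 < β) {e : ℕ → ℝ} (h0 : ∀ i, 0 ≤ e i)
    (hadj : ∀ i, e i + e (i + 1) ≤ 1) : radixValue β e ≤ β / (β ^ 2 - 1) := by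
  have h1 (i : ℕ) : e i ≤ 1 := by linarith [hadj i, h0 (i + 1)]
  have hnorm (i : ℕ) : ‖e i‖ ≤ 1 := by rw [Real.norm_of_nonneg (h0 i)]; exact h1 i
  have hs := summable_radix_of_norm_le hβ hnorm
  have hs' := summable_radix_of_norm_le hβ fun i ↦ hnorm (i + 1)
  have hpair : radixValue β e + radixValue β (fun i ↦ e (i + 1)) ≤ (β - 1)⁻¹ := calc
    _ = ∑' i, ((β ^ (i + 1))⁻¹ • e i + (β ^ (i + 1))⁻¹ • e (i + 1)) := (hs.tsum_add hs').symm
    _ ≤ radixValue β (fun _ ↦ (1 : ℝ)) := by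
      refine (hs.add hs').tsum_le_tsum (fun i ↦ ?_) (summable_radix_const hβ 1)
      rw [← smul_add]
      exact smul_le_smul_of_nonneg_left (hadj i) (by positivity)
    _ = (β - 1)⁻¹ := radixValue_one hβ
  have hrec := smul_radixValue (by positivity) hs
  have hβ' : 0 < β - 1 := sub_pos.2 hβ
  rw [le_div_iff₀ (by nlinarith)]
  calc radixValue β e * (β ^ 2 - 1)
      = (β - 1) * (e 0 + (radixValue β e + radixValue β fun i ↦ e (i + 1))) := by
        rw [smul_eq_mul] at hrec
        linear_combination (β - 1) * hrec
    _ ≤ (β - 1) * (1 + (β - 1)⁻¹) := by gcongr; exact h1 0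
    _ = β := by field_simp; ring

lemma radixValue_lt_one_of_goldenRatio_lt (hβ : Real.goldenRatio < β) {e : ℕ → ℝ}
    (h0 : ∀ i, 0 ≤ e i) (hadj : ∀ i, e i + e (i + 1) ≤ 1) : radixValue β e < 1 := by
  have hφ := Real.one_lt_goldenRatio
  have hquad : β < β ^ 2 - 1 := by nlinarith [Real.goldenRatio_sq]
  refine (radixValue_le_of_add_succ_le_one (hφ.trans hβ) h0 hadj).trans_lt ?_
  rw [div_lt_one (by linarith)]
  exact hquad

end RadixValue

section Barycentric

variable {β : ℝ}

/-- The three digits of `Ω`, which are also the vertices of the standard triangle. -/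
def vertex : Fin 3 → ℝ × ℝ := ![(0, 0), (1, 0), (0, 1)]

/-- The `j`-th barycentric coordinate of `x` with respect to the triangle with vertices
`s • vertex i`, scaled so that the three coordinates add up to `s`. Keeping the size `s` as an
argument makes the coordinates linear in `(s, x)`; digits have `s = 1`, points of `Δ_β` have
`s = 1 / (β - 1)`. -/
def baryCoord (j : Fin 3) : ℝ × ℝ × ℝ →L[ℝ] ℝ :=
  let s := ContinuousLinearMap.fst ℝ ℝ (ℝ × ℝ)
  let x := ContinuousLinearMap.snd ℝ ℝ (ℝ × ℝ)
  let x₁ := (ContinuousLinearMap.fst ℝ ℝ ℝ).comp x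
  let x₂ := (ContinuousLinearMap.snd ℝ ℝ ℝ).comp x
  ![s - x₁ - x₂, x₁, x₂] j

/-- The 0-1 sequence marking the occurrences of the letter `j` in the word `w`. -/
def letterDigits (w : ℕ → Fin 3) (j : Fin 3) (i : ℕ) : ℝ := if w i = j then 1 else 0

lemma range_vertex : range vertex = OmegaR := by
  simp only [vertex, OmegaR, Matrix.range_cons, Matrix.range_empty, union_empty, singleton_union]

lemma baryCoord_vertex (i j : Fin 3) :
    baryCoord j (1, vertex i) = if i = j then 1 else 0 := by
  fin_cases i <;> fin_cases j <;> simp [baryCoord, vertex]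

lemma vertex_injective : Function.Injective vertex := fun i j h ↦ by
  have hcoord := baryCoord_vertex i j
  rw [h, baryCoord_vertex, if_pos rfl] at hcoord
  by_contra hij
  simp [hij] at hcoord

lemma letterDigits_nonneg (w : ℕ → Fin 3) (j : Fin 3) (i : ℕ) : 0 ≤ letterDigits w j i := by
  unfold letterDigits
  positivity

lemma norm_vertex_le_one (i : Fin 3) : ‖vertex i‖ ≤ 1 := by
  fin_cases i <;> simp [vertex, Prod.norm_def]

lemma summable_radix_vertex (hβ : 1 < β) (w : ℕ → Fin 3) :
    Summable fun i ↦ (β ^ (i + 1))⁻¹ • (vertex ∘ w) i :=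
  summable_radix_of_norm_le hβ fun i ↦ norm_vertex_le_one (w i)

lemma baryCoord_radixValue (hβ : 1 < β) (w : ℕ → Fin 3) (j : Fin 3) :
    baryCoord j ((β - 1)⁻¹, radixValue β (vertex ∘ w)) = radixValue β (letterDigits w j) := by
  have hlift :=
    (summable_radix_const hβ (1 : ℝ)).hasSum.prodMk (summable_radix_vertex hβ w).hasSum
  rw [← radixValue_one hβ]
  refine (hlift.mapL (baryCoord j)).tsum_eq.symm.trans (tsum_congr fun i ↦ ?_)
  rw [← Prod.smul_mk, map_smul, Function.comp_apply, baryCoord_vertex, letterDigits]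

lemma baryCoord_nonneg_of_mem_Delta (hβ : 1 < β) (j : Fin 3) {x : ℝ × ℝ} (hx : x ∈ Delta β) :
    0 ≤ baryCoord j ((β - 1)⁻¹, x) := by
  have hconv : Convex ℝ {x | 0 ≤ baryCoord j ((β - 1)⁻¹, x)} := by
    intro u hu v hv a b ha hb hab
    have hcomb : ((β - 1)⁻¹, a • u + b • v) = a • ((β - 1)⁻¹, u) + b • ((β - 1)⁻¹, v) := by
      simp [← add_mul, hab]
    rw [mem_ofPred_eq] at hu hv ⊢
    rw [hcomb, map_add, map_smul, map_smul]
    positivity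
  refine convexHull_min ?_ hconv hx
  rintro _ ⟨d, hd, rfl⟩
  choose w hw using fun i ↦ range_vertex.symm ▸ hd i
  obtain rfl : vertex ∘ w = d := funext hw
  change 0 ≤ baryCoord j ((β - 1)⁻¹, radixValue β (vertex ∘ w))
  rw [baryCoord_radixValue hβ]
  exact tsum_nonneg fun i ↦ smul_nonneg (by positivity) (letterDigits_nonneg w j i)

lemma baryCoord_le_of_mem_fmap_image (hβ : 1 < β) (j : Fin 3) {c x : ℝ × ℝ}
    (hx : x ∈ fmap β c '' Delta β) :
    baryCoord j (1, c) ≤ β * baryCoord j ((β - 1)⁻¹, x) := by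
  obtain ⟨u, hu, rfl⟩ := hx
  have hβ' : β - 1 ≠ 0 := (sub_pos.2 hβ).ne'
  have hlift : β • ((β - 1)⁻¹, fmap β c u) = ((β - 1)⁻¹, u) + (1, c) := by
    rw [fmap, Prod.smul_mk, smul_inv_smul₀ (by positivity), Prod.mk_add_mk, smul_eq_mul]
    congr 1
    field_simp
    ring
  rw [← smul_eq_mul, ← map_smul, hlift, map_add]
  linarith [baryCoord_nonneg_of_mem_Delta hβ j hu]

end Barycentric

section Univoque

variable {β : ℝ} {w : ℕ → Fin 3}

lemma eq_head_of_mem_fmap_image (hβ : 1 < β)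
    (h : ∀ j, w 0 ≠ j → radixValue β (fun i ↦ letterDigits w j (i + 1)) < 1) {j : Fin 3}
    (hj : radixValue β (vertex ∘ w) ∈ fmap β (vertex j) '' Delta β) : j = w 0 := by
  by_contra! hne
  have hle := baryCoord_le_of_mem_fmap_image hβ j hj
  have hsum : Summable fun i ↦ (β ^ (i + 1))⁻¹ • letterDigits w j i := by
    refine summable_radix_of_norm_le (C := 1) hβ fun i ↦ ?_
    unfold letterDigits
    split_ifs <;> simp
  rw [baryCoord_vertex, if_pos rfl, baryCoord_radixValue hβ, ← smul_eq_mul,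
    smul_radixValue (by positivity) hsum, letterDigits, if_neg hne.symm, zero_add] at hle
  exact (h j hne.symm).not_ge hle

lemma vertex_comp_mem_Ufat (hβ : 1 < β)
    (h : ∀ n j, w n ≠ j → radixValue β (fun i ↦ letterDigits w j (n + (i + 1))) < 1) :
    vertex ∘ w ∈ Ufat β := by
  refine ⟨fun i ↦ range_vertex ▸ mem_range_self _, fun n hmem ↦ ?_⟩
  simp only [Ofat, mem_iUnion, ← range_vertex] at hmem
  obtain ⟨_, ⟨a, rfl⟩, _, ⟨b, rfl⟩, hab, ha, hb⟩ := hmem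
  have head_eq {j : Fin 3} (hj : radixValue β (vertex ∘ fun i ↦ w (n + i)) ∈
      fmap β (vertex j) '' Delta β) : j = w n := eq_head_of_mem_fmap_image hβ (h n) hj
  exact hab (congrArg vertex ((head_eq ha).trans (head_eq hb).symm))

lemma vertex_comp_mem_Ufat_of_constant_or_succ_ne (hβ : Real.goldenRatio < β)
    (hw : (∀ i, w i = w 0) ∨ ∀ i, w (i + 1) ≠ w i) : vertex ∘ w ∈ Ufat β := by
  refine vertex_comp_mem_Ufat (Real.one_lt_goldenRatio.trans hβ) fun n j hj ↦ ?_
  refine radixValue_lt_one_of_goldenRatio_lt hβ (fun i ↦ letterDigits_nonneg w j _) fun i ↦ ?_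
  have hisolated (m : ℕ) : ¬ (w m = j ∧ w (m + 1) = j) := by
    rintro ⟨hm, hm'⟩
    rcases hw with hconst | hne
    · exact hj ((hconst n).trans ((hconst m).symm.trans hm))
    · exact hne m (hm'.trans hm.symm)
  have hpair := hisolated (n + (i + 1))
  unfold letterDigits
  grind

end Univoque

section PeriodicWord

lemma SmallestPeriod.comp {α γ : Type*} {d : ℕ → α} {k : ℕ} (hd : SmallestPeriod d k) {f : α → γ}
    (hf : Function.Injective f) : SmallestPeriod (f ∘ d) k :=
  ⟨hd.1, fun i ↦ congrArg f (hd.2.1 i), fun j hj hjk ↦ (hd.2.2 j hj hjk).imp fun _ ↦ hf.ne⟩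

/-- The word with period block `0 1 2 1 2 …` of length `k`. The letter `0` marks the beginning of
each block, which makes `k` the smallest period. -/
def alternatingWord (k i : ℕ) : Fin 3 :=
  if i % k = 0 then 0 else if Odd (i % k) then 1 else 2

lemma smallestPeriod_alternatingWord {k : ℕ} (hk : 0 < k) :
    SmallestPeriod (alternatingWord k) k := by
  refine ⟨hk, fun i ↦ by simp [alternatingWord], fun j hj hjk ↦ ⟨0, ?_⟩⟩
  simp only [alternatingWord, zero_add, Nat.mod_eq_of_lt hjk, hj.ne', Nat.zero_mod, if_true,
    if_false]
  split_ifs <;> decide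

lemma alternatingWord_one (i : ℕ) : alternatingWord 1 i = 0 := by
  rw [alternatingWord, Nat.mod_one, if_pos rfl]

lemma alternatingWord_succ_ne {k : ℕ} (hk : k ≠ 1) (i : ℕ) :
    alternatingWord k (i + 1) ≠ alternatingWord k i := by
  have hmod : (i + 1) % k = if k ≤ i % k + 1 then i % k + 1 - k else i % k + 1 := by
    rw [Nat.add_mod_eq_ite, Nat.one_mod_eq_one.2 hk]
  have hlt (hk0 : 0 < k) : i % k < k := Nat.mod_lt i hk0
  unfold alternatingWord
  rw [hmod]
  grind

end PeriodicWord

lemma betaK_le_of_forall_Ioc {k : ℕ} {b : ℝ} (hb : b ∈ Ico 1 2)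
    (h : ∀ β ∈ Ioc b 2, ∃ d ∈ Ufat β, SmallestPeriod d k) : betaK k ≤ b := by
  have hsub : Ioc b 2 ⊆ {β | β ∈ Ioc 1 2 ∧ ∃ d ∈ Ufat β, SmallestPeriod d k} :=
    fun β hβ ↦ ⟨⟨hb.1.trans_lt hβ.1, hβ.2⟩, h β hβ⟩
  exact (csInf_le_csInf ⟨1, fun β hβ ↦ hβ.1.1.le⟩ (nonempty_Ioc.2 hb.2) hsub).trans_eq
    (csInf_Ioc hb.2)

theorem exists_smallestPeriod_forall_mem_Ufat {k : ℕ} (hk : 0 < k) :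
    ∃ d, SmallestPeriod d k ∧ ∀ β, Real.goldenRatio < β → d ∈ Ufat β := by
  have hword : (∀ i, alternatingWord k i = alternatingWord k 0) ∨
      ∀ i, alternatingWord k (i + 1) ≠ alternatingWord k i := by
    rcases eq_or_ne k 1 with rfl | hk1
    · exact .inl fun i ↦ by rw [alternatingWord_one, alternatingWord_one]
    · exact .inr (alternatingWord_succ_ne hk1)
  exact ⟨vertex ∘ alternatingWord k, (smallestPeriod_alternatingWord hk).comp vertex_injective,
    fun β hβ ↦ vertex_comp_mem_Ufat_of_constant_or_succ_ne hβ hword⟩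

theorem stmt13_general :
    (∀ k, 1 ≤ k → betaK k ≤ Real.goldenRatio) ∧
    ∀ k, 1 ≤ k → ∃ d, SmallestPeriod d k ∧ ∀ β, Real.goldenRatio < β → d ∈ Ufat β := by
  refine ⟨fun k hk ↦ ?_, fun k hk ↦ exists_smallestPeriod_forall_mem_Ufat hk⟩
  obtain ⟨d, hd, hU⟩ := exists_smallestPeriod_forall_mem_Ufat hk
  exact betaK_le_of_forall_Ioc ⟨Real.one_lt_goldenRatio.le, Real.goldenRatio_lt_two⟩
    fun β hβ ↦ ⟨d, hU β hβ.1, hd⟩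

/-- β_k ≤ (1+√5)/2 for every k ≥ 1; equivalently, for every β ∈ (1,2] with
β > (1+√5)/2 and every k ≥ 1, 𝐔_β contains a sequence of smallest period k. -/
theorem stmt13 :
    (∀ k : ℕ, 1 ≤ k → FatSierpinski.betaK k ≤ (1 + Real.sqrt 5) / 2) ∧
    ∀ β ∈ Set.Ioc (1 : ℝ) 2, (1 + Real.sqrt 5) / 2 < β → ∀ k : ℕ, 1 ≤ k →
      ∃ d ∈ FatSierpinski.Ufat β, FatSierpinski.SmallestPeriod d k := by
  refine ⟨stmt13_general.1, fun β _ hβ k hk ↦ ?_⟩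
  exact (stmt13_general.2 k hk).imp fun d hd ↦ ⟨hd.2 β hβ, hd.1⟩

end FatSierpinski
end
end
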